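/- arXiv:1905.12184 — 2 statements merged into one kernel-verified Lean document; each statement's English description precedes it below -/
import Mathlib

section
/- One has R₂·v₃₂₁ = v₃₂₁ and (J·R₃⁻¹)·v₃₂₁ = (iη̄φ̄)·v₃₂₁, so that R₂ and J·R₃⁻¹ both stabilize the subspace {x ∈ ℂ³ : ⟨x, v₃₂₁⟩ = 0}; and one has (J⁻¹·R₁·R₂)·e₁ = (−iηφ)·e₁ and (J·R₁·R₃)·e₁ = (−iηφ̄)·e₁, so that J⁻¹·R₁·R₂ and J·R₁·R₃ both stabilize the subspace {x ∈ ℂ³ : ⟨x, e₁⟩ = 0}. -/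
/-!
All four matrices lie in the unitary group of the Hermitian form `⟨x, y⟩ = xᵀ H ȳ`. Indeed
`η² - 1 = iη / α`, so `R₁ x = x + (η² - 1) ⟨x, e₁⟩ e₁` is a complex reflection with multiplier `η²`
of modulus one (`form_R1`); the cyclic permutation `J` preserves `H` (`preserves_J`) and conjugates
`R₁` to `R₂` and `R₂` to `R₃`. A unitary `g` with `g v = c v`, `c ≠ 0`, maps `v^⊥` onto itself,
because `c̄ ⟨g x, v⟩ = ⟨g x, g v⟩ = ⟨x, v⟩` (`PreservesForm.image_orthogonal`). It remains to
verify the four eigenvector identities, which are direct computations using `η η̄ = φ φ̄ = 1`.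
-/

noncomputable section

open Matrix

/-- η = exp(iπ/p) -/
def eta (p : ℕ) : ℂ := Complex.exp (Real.pi * Complex.I / p)
/-- η̄ = exp(−iπ/p) -/
def etab (p : ℕ) : ℂ := Complex.exp (-(Real.pi * Complex.I / p))
/-- φ = exp(iπt/3) -/
def phi (t : ℝ) : ℂ := Complex.exp (Real.pi * Complex.I * t / 3)
/-- φ̄ = exp(−iπt/3) -/
def phib (t : ℝ) : ℂ := Complex.exp (-(Real.pi * Complex.I * t / 3))
/-- α = 1/(2 sin(π/p)) -/
def alpha (p : ℕ) : ℂ := 1 / (2 * Real.sin (Real.pi / p))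

def R1 (p : ℕ) (t : ℝ) : Matrix (Fin 3) (Fin 3) ℂ :=
  !![eta p ^ 2, -Complex.I * eta p * phib t, -Complex.I * eta p * phi t;
     0, 1, 0;
     0, 0, 1]

def R2 (p : ℕ) (t : ℝ) : Matrix (Fin 3) (Fin 3) ℂ :=
  !![1, 0, 0;
     -Complex.I * eta p * phi t, eta p ^ 2, -Complex.I * eta p * phib t;
     0, 0, 1]

def R3 (p : ℕ) (t : ℝ) : Matrix (Fin 3) (Fin 3) ℂ :=
  !![1, 0, 0;
     0, 1, 0;
     -Complex.I * eta p * phib t, -Complex.I * eta p * phi t, eta p ^ 2]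

def Jmat : Matrix (Fin 3) (Fin 3) ℂ :=
  !![0, 0, 1;
     1, 0, 0;
     0, 1, 0]

def Hmat (p : ℕ) (t : ℝ) : Matrix (Fin 3) (Fin 3) ℂ :=
  !![1, -alpha p * phi t, -alpha p * phib t;
     -alpha p * phib t, 1, -alpha p * phi t;
     -alpha p * phi t, -alpha p * phib t, 1]

/-- The Hermitian form ⟨x,y⟩ = xᵀ·H·ȳ. -/
def form (p : ℕ) (t : ℝ) (x y : Fin 3 → ℂ) : ℂ :=
  dotProduct x ((Hmat p t).mulVec (fun i => starRingEnd ℂ (y i)))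

def v123 (p : ℕ) (t : ℝ) : Fin 3 → ℂ :=
  ![-Complex.I * eta p * phib t, 1, Complex.I * etab p * phi t]
def v231 (p : ℕ) (t : ℝ) : Fin 3 → ℂ :=
  ![Complex.I * etab p * phi t, -Complex.I * eta p * phib t, 1]
def v312 (p : ℕ) (t : ℝ) : Fin 3 → ℂ :=
  ![1, Complex.I * etab p * phi t, -Complex.I * eta p * phib t]
def v321 (p : ℕ) (t : ℝ) : Fin 3 → ℂ :=
  ![Complex.I * etab p * phib t, 1, -Complex.I * eta p * phi t]
def v132 (p : ℕ) (t : ℝ) : Fin 3 → ℂ :=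
  ![-Complex.I * eta p * phi t, Complex.I * etab p * phib t, 1]
def v213 (p : ℕ) (t : ℝ) : Fin 3 → ℂ :=
  ![1, -Complex.I * eta p * phi t, Complex.I * etab p * phib t]

/-- Membership in the unitary group of `form p t`: `g` is invertible and preserves the form. -/
def PreservesForm (p : ℕ) (t : ℝ) (g : Matrix (Fin 3) (Fin 3) ℂ) : Prop :=
  IsUnit g.det ∧ ∀ x y, form p t (g.mulVec x) (g.mulVec y) = form p t x y

lemma PreservesForm.mul {p : ℕ} {t : ℝ} {g h : Matrix (Fin 3) (Fin 3) ℂ}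
    (hg : PreservesForm p t g) (hh : PreservesForm p t h) : PreservesForm p t (g * h) := by
  refine ⟨by rw [det_mul]; exact hg.1.mul hh.1, fun x y => ?_⟩
  rw [← mulVec_mulVec, ← mulVec_mulVec, hg.2, hh.2]

lemma PreservesForm.inv {p : ℕ} {t : ℝ} {g : Matrix (Fin 3) (Fin 3) ℂ}
    (hg : PreservesForm p t g) : PreservesForm p t g⁻¹ := by
  refine ⟨isUnit_nonsing_inv_det g hg.1, fun x y => ?_⟩
  rw [← hg.2, mulVec_mulVec, mulVec_mulVec, mul_nonsing_inv g hg.1, one_mulVec, one_mulVec]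

lemma form_smul_right (p : ℕ) (t : ℝ) (c : ℂ) (x y : Fin 3 → ℂ) :
    form p t x (c • y) = starRingEnd ℂ c * form p t x y := by
  simp only [form, dotProduct, mulVec, Fin.sum_univ_three, Pi.smul_apply, smul_eq_mul, map_mul]
  ring

/-- A unitary matrix maps the orthogonal complement of an eigenvector onto itself. -/
lemma PreservesForm.image_orthogonal {p : ℕ} {t : ℝ} {g : Matrix (Fin 3) (Fin 3) ℂ}
    (hg : PreservesForm p t g) {v : Fin 3 → ℂ} {c : ℂ} (hc : c ≠ 0) (hv : g.mulVec v = c • v) :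
    (fun x => g.mulVec x) '' {x : Fin 3 → ℂ | form p t x v = 0} =
      {x : Fin 3 → ℂ | form p t x v = 0} := by
  have key : ∀ x, form p t (g.mulVec x) v = 0 ↔ form p t x v = 0 := fun x => by
    rw [← hg.2 x v, hv, form_smul_right, mul_eq_zero]
    simp [hc]
  ext y
  constructor
  · rintro ⟨x, hx, rfl⟩
    exact (key x).2 hx
  · intro hy
    have hgy : g.mulVec (g⁻¹.mulVec y) = y := by
      rw [mulVec_mulVec, mul_nonsing_inv g hg.1, one_mulVec]
    refine ⟨g⁻¹.mulVec y, (key _).1 ?_, hgy⟩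
    rw [hgy]
    exact hy

lemma eta_mul_etab (p : ℕ) : eta p * etab p = 1 := by
  rw [eta, etab, ← Complex.exp_add, add_neg_cancel, Complex.exp_zero]

lemma phi_mul_phib (t : ℝ) : phi t * phib t = 1 := by
  rw [phi, phib, ← Complex.exp_add, add_neg_cancel, Complex.exp_zero]

lemma conj_eta (p : ℕ) : starRingEnd ℂ (eta p) = etab p := by
  rw [eta, etab, ← Complex.exp_conj]
  simp [neg_div]

lemma conj_phi (t : ℝ) : starRingEnd ℂ (phi t) = phib t := by
  rw [phi, phib, ← Complex.exp_conj]
  simp [neg_div, Complex.conj_ofNat]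

lemma conj_phib (t : ℝ) : starRingEnd ℂ (phib t) = phi t := by
  rw [← conj_phi, Complex.conj_conj]

lemma conj_alpha (p : ℕ) : starRingEnd ℂ (alpha p) = alpha p := by
  rw [alpha, map_div₀, map_mul, Complex.conj_ofReal, map_one, Complex.conj_ofNat]

/-- `η - η̄ = 2i sin(π/p) = i / α`; the sine is nonzero because `0 < π/p < π`. -/
lemma alpha_mul_sub {p : ℕ} (hp : 3 ≤ p) : alpha p * (eta p - etab p) = Complex.I := by
  have hp' : (3 : ℝ) ≤ p := by exact_mod_cast hp
  have hs : Real.sin (Real.pi / p) ≠ 0 :=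
    (Real.sin_pos_of_pos_of_lt_pi (by positivity)
      (div_lt_self Real.pi_pos (by linarith))).ne'
  have hs' : (Real.sin (Real.pi / p) : ℂ) ≠ 0 := by exact_mod_cast hs
  have h : eta p - etab p = 2 * Real.sin (Real.pi / p) * Complex.I := by
    have e : (Real.pi * Complex.I / p : ℂ) = ((Real.pi / p : ℝ) : ℂ) * Complex.I := by
      push_cast; ring
    rw [eta, etab, e, ← neg_mul, Complex.exp_mul_I, Complex.exp_mul_I, Complex.cos_neg,
      Complex.sin_neg, Complex.ofReal_sin]
    ring
  rw [h, alpha]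
  field_simp

lemma neg_I_mul_eta {p : ℕ} (hp : 3 ≤ p) :
    -Complex.I * eta p = (eta p ^ 2 - 1) * -alpha p := by
  linear_combination eta p * alpha_mul_sub hp + alpha p * eta_mul_etab p

lemma isUnit_det_R1 (p : ℕ) (t : ℝ) : IsUnit (R1 p t).det := by
  rw [isUnit_iff_ne_zero, R1, det_fin_three]
  simp [eta]

/-- `R₁` is the reflection `x ↦ x + (η² - 1) ⟨x, e₁⟩ e₁`, so `⟨R₁ x, R₁ y⟩ - ⟨x, y⟩` equals
`(|η²|² - 1) ⟨x, e₁⟩ ⟨e₁, y⟩ = 0`. -/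
lemma form_R1 {p : ℕ} (hp : 3 ≤ p) (t : ℝ) (x y : Fin 3 → ℂ) :
    form p t ((R1 p t).mulVec x) ((R1 p t).mulVec y) = form p t x y := by
  simp only [form, R1, Hmat, neg_I_mul_eta hp, dotProduct, mulVec, Fin.sum_univ_three, of_apply,
    cons_val, map_add, map_mul, map_sub, map_neg, map_pow, map_one, map_zero, conj_eta, conj_phi,
    conj_phib, conj_alpha]
  linear_combination (eta p * etab p + 1) *
    (x 0 - alpha p * phib t * x 1 - alpha p * phi t * x 2) *
    (starRingEnd ℂ (y 0) - alpha p * phi t * starRingEnd ℂ (y 1)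
      - alpha p * phib t * starRingEnd ℂ (y 2)) * eta_mul_etab p

lemma isUnit_det_J : IsUnit Jmat.det := by
  rw [isUnit_iff_ne_zero, Jmat, det_fin_three]
  simp

lemma preserves_J (p : ℕ) (t : ℝ) : PreservesForm p t Jmat := by
  refine ⟨isUnit_det_J, fun x y => ?_⟩
  simp only [form, Jmat, Hmat, dotProduct, mulVec, Fin.sum_univ_three, of_apply, cons_val]
  simp only [zero_mul, one_mul, zero_add, add_zero]
  ring

lemma preserves_R1 {p : ℕ} (hp : 3 ≤ p) (t : ℝ) : PreservesForm p t (R1 p t) :=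
  ⟨isUnit_det_R1 p t, form_R1 hp t⟩

lemma R2_eq (p : ℕ) (t : ℝ) : R2 p t = Jmat * R1 p t * Jmat⁻¹ := by
  have h : R2 p t * Jmat = Jmat * R1 p t := by
    ext i j
    fin_cases i <;> fin_cases j <;> simp [R1, R2, Jmat, mul_apply, Fin.sum_univ_three]
  rw [← h, mul_nonsing_inv_cancel_right _ _ isUnit_det_J]

lemma R3_eq (p : ℕ) (t : ℝ) : R3 p t = Jmat * R2 p t * Jmat⁻¹ := by
  have h : R3 p t * Jmat = Jmat * R2 p t := by
    ext i j
    fin_cases i <;> fin_cases j <;> simp [R3, R2, Jmat, mul_apply, Fin.sum_univ_three]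
  rw [← h, mul_nonsing_inv_cancel_right _ _ isUnit_det_J]

lemma preserves_R2 {p : ℕ} (hp : 3 ≤ p) (t : ℝ) : PreservesForm p t (R2 p t) := by
  rw [R2_eq]
  exact ((preserves_J p t).mul (preserves_R1 hp t)).mul (preserves_J p t).inv

lemma preserves_R3 {p : ℕ} (hp : 3 ≤ p) (t : ℝ) : PreservesForm p t (R3 p t) := by
  rw [R3_eq]
  exact ((preserves_J p t).mul (preserves_R2 hp t)).mul (preserves_J p t).inv

lemma R2_mulVec_v321 (p : ℕ) (t : ℝ) : (R2 p t).mulVec (v321 p t) = v321 p t := by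
  ext i
  fin_cases i <;> simp [R2, v321, mulVec, dotProduct, Fin.sum_univ_three]
  linear_combination (-eta p * etab p * phi t * phib t + eta p ^ 2 * phi t * phib t) *
    Complex.I_sq + phi t * phib t * eta_mul_etab p + (1 - eta p ^ 2) * phi_mul_phib t

lemma J_mul_R3_inv_mulVec_v321 {p : ℕ} (hp : 3 ≤ p) (t : ℝ) :
    (Jmat * (R3 p t)⁻¹).mulVec (v321 p t) = (Complex.I * etab p * phib t) • v321 p t := by
  have hR := (preserves_R3 hp t).1
  -- `w = R₃⁻¹ v₃₂₁`: the first two coordinates are those of `v₃₂₁`.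
  obtain ⟨w, hw⟩ : ∃ w : Fin 3 → ℂ,
    w = ![Complex.I * etab p * phib t, 1, -(etab p ^ 2 * phib t ^ 2)] := ⟨_, rfl⟩
  have h1 : (R3 p t).mulVec w = v321 p t := by
    ext i
    fin_cases i <;> simp [R3, v321, hw, mulVec, dotProduct, Fin.sum_univ_three]
    linear_combination -eta p * etab p * phib t ^ 2 * Complex.I_sq
      - eta p * etab p * phib t ^ 2 * eta_mul_etab p
  rw [← mulVec_mulVec, ← h1, mulVec_mulVec w, nonsing_inv_mul _ hR, one_mulVec, h1, hw]
  ext i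
  fin_cases i <;> simp [Jmat, v321, mulVec, dotProduct, Fin.sum_univ_three]
  · linear_combination -etab p ^ 2 * phib t ^ 2 * Complex.I_sq
  · linear_combination eta p * etab p * phi t * phib t * Complex.I_sq
      - phi t * phib t * eta_mul_etab p - phi_mul_phib t

lemma J_inv_mul_R1_mul_R2_mulVec (p : ℕ) (t : ℝ) :
    (Jmat⁻¹ * R1 p t * R2 p t).mulVec ![1, 0, 0] =
      (-Complex.I * eta p * phi t) • ![1, 0, 0] := by
  have h : (R1 p t * R2 p t).mulVec ![1, 0, 0] =
      Jmat.mulVec ((-Complex.I * eta p * phi t) • ![1, 0, 0]) := by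
    rw [← mulVec_mulVec]
    ext i
    fin_cases i <;> simp [R1, R2, Jmat, mulVec, dotProduct, Fin.sum_univ_three]
    linear_combination eta p ^ 2 * phi t * phib t * Complex.I_sq - eta p ^ 2 * phi_mul_phib t
  rw [mul_assoc, ← mulVec_mulVec, h, mulVec_mulVec, nonsing_inv_mul _ isUnit_det_J, one_mulVec]

lemma J_mul_R1_mul_R3_mulVec (p : ℕ) (t : ℝ) :
    (Jmat * R1 p t * R3 p t).mulVec ![1, 0, 0] =
      (-Complex.I * eta p * phib t) • ![1, 0, 0] := by
  rw [← mulVec_mulVec, ← mulVec_mulVec]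
  ext i
  fin_cases i <;> simp [R1, R3, Jmat, mulVec, dotProduct, Fin.sum_univ_three]
  linear_combination eta p ^ 2 * phi t * phib t * Complex.I_sq - eta p ^ 2 * phi_mul_phib t

/-- R₂·v₃₂₁ = v₃₂₁ and (J·R₃⁻¹)·v₃₂₁ = (iη̄φ̄)·v₃₂₁, so R₂ and J·R₃⁻¹ stabilize
{x : ⟨x, v₃₂₁⟩ = 0}; and (J⁻¹·R₁·R₂)·e₁ = (−iηφ)·e₁ and (J·R₁·R₃)·e₁ = (−iηφ̄)·e₁,
so J⁻¹·R₁·R₂ and J·R₁·R₃ stabilize {x : ⟨x, e₁⟩ = 0}. -/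
theorem stabilizers_v321_e1 (p : ℕ) (hp : 3 ≤ p) (t : ℝ) :
    (R2 p t).mulVec (v321 p t) = v321 p t ∧
    (Jmat * (R3 p t)⁻¹).mulVec (v321 p t) = (Complex.I * etab p * phib t) • v321 p t ∧
    (fun x => (R2 p t).mulVec x) '' {x : Fin 3 → ℂ | form p t x (v321 p t) = 0} =
      {x : Fin 3 → ℂ | form p t x (v321 p t) = 0} ∧
    (fun x => (Jmat * (R3 p t)⁻¹).mulVec x) '' {x : Fin 3 → ℂ | form p t x (v321 p t) = 0} =
      {x : Fin 3 → ℂ | form p t x (v321 p t) = 0} ∧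
    (Jmat⁻¹ * R1 p t * R2 p t).mulVec ![1, 0, 0] = (-Complex.I * eta p * phi t) • ![1, 0, 0] ∧
    (Jmat * R1 p t * R3 p t).mulVec ![1, 0, 0] = (-Complex.I * eta p * phib t) • ![1, 0, 0] ∧
    (fun x => (Jmat⁻¹ * R1 p t * R2 p t).mulVec x) ''
        {x : Fin 3 → ℂ | form p t x ![1, 0, 0] = 0} =
      {x : Fin 3 → ℂ | form p t x ![1, 0, 0] = 0} ∧
    (fun x => (Jmat * R1 p t * R3 p t).mulVec x) ''
        {x : Fin 3 → ℂ | form p t x ![1, 0, 0] = 0} =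
      {x : Fin 3 → ℂ | form p t x ![1, 0, 0] = 0} := by
  have hη : eta p ≠ 0 := Complex.exp_ne_zero _
  have hηb : etab p ≠ 0 := Complex.exp_ne_zero _
  have hφ : phi t ≠ 0 := Complex.exp_ne_zero _
  have hφb : phib t ≠ 0 := Complex.exp_ne_zero _
  have hJ := preserves_J p t
  have hR1 := preserves_R1 hp t
  have hR2 := preserves_R2 hp t
  have hR3 := preserves_R3 hp t
  refine ⟨R2_mulVec_v321 p t, J_mul_R3_inv_mulVec_v321 hp t,
    hR2.image_orthogonal one_ne_zero (by rw [one_smul, R2_mulVec_v321]),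
    (hJ.mul hR3.inv).image_orthogonal (by simp [hηb, hφb]) (J_mul_R3_inv_mulVec_v321 hp t),
    J_inv_mul_R1_mul_R2_mulVec p t, J_mul_R1_mul_R3_mulVec p t,
    ((hJ.inv.mul hR1).mul hR2).image_orthogonal (by simp [hη, hφ])
      (J_inv_mul_R1_mul_R2_mulVec p t),
    ((hJ.mul hR1).mul hR3).image_orthogonal (by simp [hη, hφb]) (J_mul_R1_mul_R3_mulVec p t)⟩
end
end

section
/- For each admissible pair (p,t), the subgroup K has finite index in Γ̃(p,t). -/
/-!
Write `a = J R₁ R₃`, `b = J R₂ R₁`, `c = J R₃ R₂`. The matrices satisfy `J³ = 1`, `R₁ᵖ = 1`,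
`J Rᵢ J⁻¹ = Rᵢ₊₁` and the braid relations. From the relations not involving `p` one gets

* `J` permutes `a, b, c` cyclically by conjugation;
* `R₁` commutes with `a`, sends `b` to `c` and sends `c` to `c b c⁻¹`

(this is the Hurwitz action of braids on a free group of rank three). Hence `K = ⟨a, b, c⟩` is normal
in `Γ̃ = ⟨R₁, J⟩` (`normalizes`). In the quotient `b = 1` becomes `r j⁻¹ r = j`, that is,
`x = r j⁻¹` satisfies `x² = 1` and `(x r)³ = 1`. With `rᵖ = 1` this makes the quotient an image of the
von Dyck group `(2, 3, p)`, which is finite for `p = 3, 4, 5` (`finite_vonDyck`; it is the rotation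
group of the tetrahedron, octahedron or icosahedron). Finiteness is shown by listing
representatives of the double cosets of `⟨r⟩`, which correspond to the orbits of a vertex rotation
on the set of vertices.
-/

noncomputable section

open Matrix

/-- The admissible pairs `(p,t)`: the values for which Mostow's group Γ(p,t) is discrete. -/
def admissible (p : ℕ) (t : ℝ) : Prop :=
  (p = 3 ∧ (t = 0 ∨ t = 1/30 ∨ t = 1/18 ∨ t = 1/12 ∨ t = 5/42 ∨ t = 1/6 ∨ t = 7/30 ∨ t = 1/3)) ∨
  (p = 4 ∧ (t = 0 ∨ t = 1/12 ∨ t = 3/20 ∨ t = 1/4 ∨ t = 5/12)) ∨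
  (p = 5 ∧ (t = 1/10 ∨ t = 1/5 ∨ t = 11/30 ∨ t = 7/10))

/-! ### Finiteness of the von Dyck groups (2, 3, p) for p = 3, 4, 5 -/

/-- If the finite set `⟨r⟩ W ⟨r⟩` contains `1` and is stable under left multiplication by the
involution `x`, then it is all of a group generated by `r` and `x`. -/
lemma finite_of_double_cosets {G : Type*} [Group G] (r x : G) (p : ℕ) (hp : 0 < p)
    (hr : r ^ p = 1) (hx : x * x = 1) (htop : Subgroup.closure {r, x} = ⊤)
    (W : Set G) (hW : W.Finite) (h1 : (1 : G) ∈ W)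
    (hstep : ∀ w ∈ W, ∀ i : ℤ, ∃ w' ∈ W, ∃ a b : ℤ, x * r ^ i * w = r ^ a * w' * r ^ b) :
    Finite G := by
  have hfin : (Set.range fun i : ℤ => r ^ i).Finite := by
    have h := (isOfFinOrder_iff_pow_eq_one.mpr ⟨p, hp, hr⟩).finite_zpowers
    exact h.subset (by rintro _ ⟨i, rfl⟩; exact ⟨i, rfl⟩)
  have hS : (Set.image2 (fun g h : G => g * h)
      (Set.image2 (fun g h : G => g * h) (Set.range fun i : ℤ => r ^ i) W)
      (Set.range fun i : ℤ => r ^ i)).Finite := (hfin.image2 _ hW).image2 _ hfin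
  refine Set.finite_univ_iff.mp (hS.subset fun g _ => ?_)
  suffices h : ∃ w ∈ W, ∃ a b : ℤ, g = r ^ a * w * r ^ b by
    obtain ⟨w, hw, a, b, rfl⟩ := h
    exact ⟨_, ⟨_, ⟨a, rfl⟩, w, hw, rfl⟩, _, ⟨b, rfl⟩, rfl⟩
  have hxstep : ∀ g : G, (∃ w ∈ W, ∃ a b : ℤ, g = r ^ a * w * r ^ b) →
      ∃ w ∈ W, ∃ a b : ℤ, x * g = r ^ a * w * r ^ b := by
    rintro _ ⟨w, hw, a, b, rfl⟩
    obtain ⟨w', hw', c, d, e⟩ := hstep w hw a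
    refine ⟨w', hw', c, d + b, ?_⟩
    rw [_root_.zpow_add, ← mul_assoc, ← mul_assoc, ← mul_assoc, e]
  have hxi : x⁻¹ = x := inv_eq_of_mul_eq_one_left hx
  have hg : g ∈ Subgroup.closure {r, x} := htop ▸ Subgroup.mem_top g
  induction hg using Subgroup.closure_induction_left with
  | one => exact ⟨1, h1, 0, 0, by simp⟩
  | mul_left s hs y hy ih =>
    rcases hs with rfl | rfl
    · obtain ⟨w, hw, a, b, rfl⟩ := ih trivial
      exact ⟨w, hw, 1 + a, b, by rw [_root_.zpow_add, zpow_one]; simp only [mul_assoc]⟩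
    · exact hxstep _ (ih trivial)
  | inv_mul_cancel s hs y hy ih =>
    rcases hs with rfl | rfl
    · obtain ⟨w, hw, a, b, rfl⟩ := ih trivial
      exact ⟨w, hw, -1 + a, b, by rw [_root_.zpow_add, _root_.zpow_neg_one]; simp only [mul_assoc]⟩
    · rw [hxi]; exact hxstep _ (ih trivial)

/-- If `r` is inverted by `z` then so are all its powers. -/
lemma zpow_mul_of_inverted {G : Type*} [Group G] {r z : G} (h : r * z = z * r⁻¹) (i : ℤ) :
    r ^ i * z = z * r ^ (-i) := by
  have h' : SemiconjBy z r⁻¹ r := h.symm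
  have := (h'.zpow_right i).eq
  rw [← this, _root_.inv_zpow, _root_.zpow_neg]

/-- The group `⟨r, j | rᵖ, j³, (r j⁻¹)²⟩` is finite for `p = 3, 4, 5`. -/
lemma finite_vonDyck {G : Type*} [Group G] (r j : G) (p : ℕ) (hp : p = 3 ∨ p = 4 ∨ p = 5)
    (hr : r ^ p = 1) (hj : j ^ 3 = 1) (hrel : r * j⁻¹ * r = j)
    (htop : Subgroup.closure {r, j} = ⊤) : Finite G := by
  obtain ⟨x, hxdef⟩ : ∃ x, x = r * j⁻¹ := ⟨_, rfl⟩
  have hx : x * x = 1 := by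
    rw [hxdef, ← mul_assoc, hrel, mul_inv_cancel]
  have hxx (g : G) : x * (x * g) = g := by rw [← mul_assoc, hx, one_mul]
  have hxi : x⁻¹ = x := inv_eq_of_mul_eq_one_left hx
  have hjx : j = x * r := by
    have : x⁻¹ * r = j := by rw [hxdef]; group
    rw [← this, hxi]
  have htop' : Subgroup.closure {r, x} = ⊤ := by
    rw [eq_top_iff, ← htop, Subgroup.closure_le]
    have hrm : r ∈ Subgroup.closure {r, x} := Subgroup.subset_closure (by simp)
    have hxm : x ∈ Subgroup.closure {r, x} := Subgroup.subset_closure (by simp)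
    rintro _ (rfl | rfl)
    · exact hrm
    · rw [hjx]; exact mul_mem hxm hrm
  have e1 : x * r * x = r⁻¹ * x * r⁻¹ := by
    rw [hjx] at hj
    have h : r * (x * r * x) * r * x = 1 := by
      have h' : x * (r * (x * r * x) * r * x) * x⁻¹ = 1 := by
        rw [← hj]; simp only [hxi, mul_assoc, hx, pow_succ, pow_zero, one_mul, mul_one]
      have := congrArg (fun g => x⁻¹ * g * x) h'
      simpa [mul_assoc] using this
    calc x * r * x = r⁻¹ * (r * (x * r * x) * r * x) * x⁻¹ * r⁻¹ := by group
      _ = r⁻¹ * x * r⁻¹ := by rw [h, hxi, mul_one]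
  have e1' : x * r⁻¹ * x = r * x * r := by
    have := congrArg (fun g => g⁻¹) e1
    simpa [hxi, mul_assoc] using this
  have hone (i : ℤ) : x * r ^ i * 1 = r ^ (0 : ℤ) * x * r ^ i := by simp
  have ex0 : x * r ^ (0 : ℤ) * x = r ^ (0 : ℤ) * 1 * r ^ (0 : ℤ) := by simp [hx]
  have ex1 : x * r ^ (1 : ℤ) * x = r ^ (-1 : ℤ) * x * r ^ (-1 : ℤ) := by simpa using e1
  have exm1 : x * r ^ (-1 : ℤ) * x = r ^ (1 : ℤ) * x * r ^ (1 : ℤ) := by simpa using e1'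
  -- Representatives: `1, x` for `p = 3`; also `y = x r² x` for `p = 4, 5`, and `z = x r⁻² y` for
  -- `p = 5`.
  obtain ⟨y, hy⟩ : ∃ y, y = x * r ^ (2 : ℤ) * x := ⟨_, rfl⟩
  have hxy : x * y = r ^ (2 : ℤ) * x := by rw [hy]; simp only [mul_assoc, hxx]
  have em2 : x * r ^ (-2 : ℤ) * x = r * y * r := by
    calc x * r ^ (-2 : ℤ) * x = x * r⁻¹ * (x * x) * r⁻¹ * x := by rw [hx]; group
      _ = (x * r⁻¹ * x) * (x * r⁻¹ * x) := by simp only [mul_assoc]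
      _ = r * y * r := by rw [e1', hy, zpow_two]; group
  have hred (n : ℤ) (hn : r ^ n = 1) (i k : ℤ) (h : n ∣ i - k) : r ^ i = r ^ k := by
    obtain ⟨m, hm⟩ := h
    rw [show i = n * m + k by lia, _root_.zpow_add, _root_.zpow_mul, hn, _root_.one_zpow, one_mul]
  rcases hp with rfl | rfl | rfl
  · refine finite_of_double_cosets r x 3 (by norm_num) hr hx htop' {1, x} (by simp) (by simp) ?_
    have hr' : r ^ (3 : ℤ) = 1 := by exact_mod_cast hr
    rintro _ (rfl | rfl) i
    · exact ⟨x, by simp, _, _, hone i⟩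
    · obtain h | h | h : (3 : ℤ) ∣ i - 0 ∨ (3 : ℤ) ∣ i - 1 ∨ (3 : ℤ) ∣ i - (-1) := by lia
      all_goals rw [hred 3 hr' i _ h]
      · exact ⟨_, by simp, _, _, ex0⟩
      · exact ⟨_, by simp, _, _, ex1⟩
      · exact ⟨_, by simp, _, _, exm1⟩
  · refine finite_of_double_cosets r x 4 (by norm_num) hr hx htop' {1, x, y} (by simp) (by simp) ?_
    have hr' : r ^ (4 : ℤ) = 1 := by exact_mod_cast hr
    -- `y` represents the vertex of the octahedron antipodal to the one fixed by `r`.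
    have hry : r * y = y * r⁻¹ := by
      rw [eq_mul_inv_iff_mul_eq, ← em2, hy, hred 4 hr' 2 (-2) (by norm_num)]
    rintro _ (rfl | rfl | rfl) i
    · exact ⟨x, by simp, _, _, hone i⟩
    · obtain h | h | h | h : (4 : ℤ) ∣ i - 0 ∨ (4 : ℤ) ∣ i - 1 ∨ (4 : ℤ) ∣ i - (-1) ∨
        (4 : ℤ) ∣ i - 2 := by lia
      all_goals rw [hred 4 hr' i _ h]
      · exact ⟨_, by simp, _, _, ex0⟩
      · exact ⟨_, by simp, _, _, ex1⟩
      · exact ⟨_, by simp, _, _, exm1⟩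
      · exact ⟨y, by simp, 0, 0, by simp [hy]⟩
    · refine ⟨x, by simp, 2, -i, ?_⟩
      rw [mul_assoc, zpow_mul_of_inverted hry, ← mul_assoc, hxy]
  · obtain ⟨z, hz⟩ : ∃ z, z = x * r ^ (-2 : ℤ) * y := ⟨_, rfl⟩
    refine finite_of_double_cosets r x 5 (by norm_num) hr hx htop' {1, x, y, z}
      (by simp) (by simp) ?_
    have hr' : r ^ (5 : ℤ) = 1 := by exact_mod_cast hr
    have h32 : r ^ (3 : ℤ) = r ^ (-2 : ℤ) := hred 5 hr' _ _ (by norm_num)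
    have hxz : x * z = r ^ (-2 : ℤ) * y := by rw [hz]; simp only [mul_assoc, hxx]
    have hy' : y = r⁻¹ * (x * r ^ (-2 : ℤ) * x) * r⁻¹ := by rw [em2]; group
    -- `z` represents the vertex of the icosahedron antipodal to the one fixed by `r`.
    have hrz : r * z = z * r⁻¹ := by
      have h : z = r⁻¹ * z * r⁻¹ := by
        calc z = x * r ^ (-2 : ℤ) * (r⁻¹ * (x * r ^ (-2 : ℤ) * x) * r⁻¹) := by rw [hz, ← hy']
          _ = x * (r ^ (3 : ℤ))⁻¹ * x * r ^ (-2 : ℤ) * x * r⁻¹ := by group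
          _ = (x * r ^ (2 : ℤ) * x) * r ^ (-2 : ℤ) * x * r⁻¹ := by rw [h32]; group
          _ = r⁻¹ * (x * r ^ (-2 : ℤ) * x) * r⁻¹ * r ^ (-2 : ℤ) * x * r⁻¹ := by rw [← hy, ← hy']
          _ = r⁻¹ * (x * r ^ (-2 : ℤ) * (x * (r ^ (3 : ℤ))⁻¹ * x)) * r⁻¹ := by group
          _ = r⁻¹ * z * r⁻¹ := by rw [h32, hz, hy]; group
      calc r * z = r * (r⁻¹ * z * r⁻¹) := by rw [← h]
        _ = z * r⁻¹ := by group
    have ey1 : x * r ^ (1 : ℤ) * y = r ^ (-2 : ℤ) * x * r ^ (-1 : ℤ) := by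
      calc x * r ^ (1 : ℤ) * y = (x * r * x) * r ^ (2 : ℤ) * x := by rw [hy]; group
        _ = r⁻¹ * x * r⁻¹ * r ^ (2 : ℤ) * x := by rw [e1]
        _ = r⁻¹ * (x * r * x) := by group
        _ = r⁻¹ * r⁻¹ * x * r⁻¹ := by rw [e1]; simp only [mul_assoc]
        _ = _ := by group
    have eym1 : x * r ^ (-1 : ℤ) * y = r ^ (2 : ℤ) * y * r ^ (1 : ℤ) := by
      calc x * r ^ (-1 : ℤ) * y = (x * r⁻¹ * x) * r ^ (2 : ℤ) * x := by rw [hy]; group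
        _ = r * (x * r ^ (3 : ℤ) * x) := by rw [e1']; group
        _ = r * r * y * r := by rw [h32, em2]; simp only [mul_assoc]
        _ = _ := by rw [zpow_two, zpow_one]
    have ey2 : x * r ^ (2 : ℤ) * y = r ^ (-1 : ℤ) * y * r ^ (-1 : ℤ) := by
      calc x * r ^ (2 : ℤ) * y = x * (r ^ (2 : ℤ) * y * r ^ (1 : ℤ)) * r⁻¹ := by group
        _ = (x * x) * r ^ (-1 : ℤ) * y * r⁻¹ := by rw [← eym1]; simp only [mul_assoc]
        _ = _ := by rw [hx]; group
    rintro _ (rfl | rfl | rfl | rfl) i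
    · exact ⟨x, by simp, _, _, hone i⟩
    · obtain h | h | h | h | h : (5 : ℤ) ∣ i - 0 ∨ (5 : ℤ) ∣ i - 1 ∨ (5 : ℤ) ∣ i - (-1) ∨
        (5 : ℤ) ∣ i - 2 ∨ (5 : ℤ) ∣ i - (-2) := by lia
      all_goals rw [hred 5 hr' i _ h]
      · exact ⟨_, by simp, _, _, ex0⟩
      · exact ⟨_, by simp, _, _, ex1⟩
      · exact ⟨_, by simp, _, _, exm1⟩
      · exact ⟨y, by simp, 0, 0, by simp [hy]⟩
      · exact ⟨y, by simp, 1, 1, by simpa using em2⟩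
    · obtain h | h | h | h | h : (5 : ℤ) ∣ i - 0 ∨ (5 : ℤ) ∣ i - 1 ∨ (5 : ℤ) ∣ i - (-1) ∨
        (5 : ℤ) ∣ i - 2 ∨ (5 : ℤ) ∣ i - (-2) := by lia
      all_goals rw [hred 5 hr' i _ h]
      · exact ⟨x, by simp, 2, 0, by simpa using hxy⟩
      · exact ⟨_, by simp, _, _, ey1⟩
      · exact ⟨_, by simp, _, _, eym1⟩
      · exact ⟨_, by simp, _, _, ey2⟩
      · exact ⟨z, by simp, 0, 0, by simp [hz]⟩
    · refine ⟨y, by simp, -2, -i, ?_⟩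
      rw [mul_assoc, zpow_mul_of_inverted hrz, ← mul_assoc, hxz]

/-! ### The subgroup K in an abstract group with the braid relations -/

/-- Conjugation by `g` and by `g⁻¹` maps a generating set of `K` into `K`, so `g` normalizes `K`. -/
lemma mem_normalizer_of_generators {G : Type*} [Group G] {s : Set G} {g : G}
    (h : ∀ u ∈ s, g * u * g⁻¹ ∈ Subgroup.closure s)
    (h' : ∀ u ∈ s, g⁻¹ * u * g ∈ Subgroup.closure s) :
    g ∈ Subgroup.normalizer (Subgroup.closure s : Set G) := by
  have key : ∀ g : G, (∀ u ∈ s, g * u * g⁻¹ ∈ Subgroup.closure s) →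
      ∀ u ∈ Subgroup.closure s, g * u * g⁻¹ ∈ Subgroup.closure s := by
    intro g h u hu
    have : Subgroup.closure s ≤ (Subgroup.closure s).comap (MulAut.conj g).toMonoidHom := by
      rw [Subgroup.closure_le]
      intro v hv
      simpa using h v hv
    simpa using this hu
  rw [Subgroup.mem_normalizer_iff]
  refine fun u => ⟨key g h u, fun hu => ?_⟩
  have := key g⁻¹ (by simpa using h') _ hu
  simpa [mul_assoc] using this

/-- `⟨r₁, j⟩` normalizes `K`: the element `j` permutes the three generators of `K` cyclically, and
`r₁` acts on them by a Hurwitz move. -/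
lemma normalizes {G : Type*} [Group G] (r1 r2 r3 j : G)
    (h12 : j * r1 = r2 * j) (h23 : j * r2 = r3 * j) (h31 : j * r3 = r1 * j)
    (b12 : r1 * r2 * r1 = r2 * r1 * r2) (b13 : r1 * r3 * r1 = r3 * r1 * r3) :
    Subgroup.closure {r1, j} ≤ Subgroup.normalizer
      (Subgroup.closure {j * r1 * r3, j * r2 * r1, j * r3 * r2} : Set G) := by
  set a := j * r1 * r3 with ha
  set b := j * r2 * r1 with hb
  set c := j * r3 * r2 with hc
  have hr1a : r1 * a = a * r1 := by
    calc r1 * a = (r1 * j) * r1 * r3 := by rw [ha]; simp only [mul_assoc]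
      _ = j * (r3 * r1 * r3) := by rw [← h31]; simp only [mul_assoc]
      _ = a * r1 := by rw [← b13, ha]; simp only [mul_assoc]
  have hr1b : r1 * b = c * r1 := by
    calc r1 * b = (r1 * j) * r2 * r1 := by rw [hb]; simp only [mul_assoc]
      _ = c * r1 := by rw [← h31, hc]
  have hcb : c * b = j * j * r2 * (r1 * r2 * r1) := by
    calc c * b = j * r3 * (r2 * j) * r2 * r1 := by rw [hb, hc]; simp only [mul_assoc]
      _ = j * (r3 * j) * r1 * r2 * r1 := by rw [← h12]; simp only [mul_assoc]
      _ = _ := by rw [← h23]; simp only [mul_assoc]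
  have hr1cb : r1 * (c * b) = c * b * r1 := by
    calc r1 * (c * b) = (r1 * j) * j * r2 * (r1 * r2 * r1) := by
          rw [hcb]; simp only [mul_assoc]
      _ = j * (r3 * j) * r2 * (r1 * r2 * r1) := by rw [← h31]; simp only [mul_assoc]
      _ = j * j * r2 * (r2 * r1 * r2) * r1 := by rw [← h23]; simp only [mul_assoc]
      _ = _ := by rw [← b12, hcb]
  have hja : j * a = b * j := by
    calc j * a = j * (j * r1) * r3 := by rw [ha]; simp only [mul_assoc]
      _ = j * r2 * (j * r3) := by rw [h12]; simp only [mul_assoc]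
      _ = _ := by rw [h31, hb]; simp only [mul_assoc]
  have hjb : j * b = c * j := by
    calc j * b = j * (j * r2) * r1 := by rw [hb]; simp only [mul_assoc]
      _ = j * r3 * (j * r1) := by rw [h23]; simp only [mul_assoc]
      _ = _ := by rw [h12, hc]; simp only [mul_assoc]
  have hjc : j * c = a * j := by
    calc j * c = j * (j * r3) * r2 := by rw [hc]; simp only [mul_assoc]
      _ = j * r1 * (j * r2) := by rw [h31]; simp only [mul_assoc]
      _ = _ := by rw [h23, ha]; simp only [mul_assoc]
  have hr1c : r1 * c = c * b * c⁻¹ * r1 := by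
    calc r1 * c = r1 * (c * b) * b⁻¹ := by group
      _ = c * b * (r1 * b⁻¹) := by rw [hr1cb]; group
      _ = _ := by
        rw [show r1 * b⁻¹ = c⁻¹ * r1 by
          rw [mul_inv_eq_iff_eq_mul, mul_assoc, hr1b]; group]
        simp only [mul_assoc]
  have hr1b' : b * r1 = r1 * (b⁻¹ * c * b) := by
    calc b * r1 = c⁻¹ * (c * b * r1) := by group
      _ = c⁻¹ * (r1 * b * (b⁻¹ * c * b)) := by rw [← hr1cb]; group
      _ = _ := by rw [hr1b]; group
  have ma : a ∈ Subgroup.closure {a, b, c} := Subgroup.subset_closure (by simp)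
  have mb : b ∈ Subgroup.closure {a, b, c} := Subgroup.subset_closure (by simp)
  have mc : c ∈ Subgroup.closure {a, b, c} := Subgroup.subset_closure (by simp)
  have conj {g u v : G} (h : g * u = v * g) : g * u * g⁻¹ = v := by rw [h]; group
  have conj' {g u v : G} (h : u * g = g * v) : g⁻¹ * u * g = v := by rw [mul_assoc, h]; group
  rw [Subgroup.closure_le]
  rintro _ (rfl | rfl)
  · refine mem_normalizer_of_generators ?_ ?_
    · rintro _ (h | h | h) <;> rw [h]
      · rwa [conj hr1a]
      · rwa [conj hr1b]
      · rw [conj hr1c]; exact mul_mem (mul_mem mc mb) (inv_mem mc)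
    · rintro _ (h | h | h) <;> rw [h]
      · rwa [conj' hr1a.symm]
      · rw [conj' hr1b']; exact mul_mem (mul_mem (inv_mem mb) mc) mb
      · rwa [conj' hr1b.symm]
  · refine mem_normalizer_of_generators ?_ ?_
    · rintro _ (h | h | h) <;> rw [h]
      · rwa [conj hja]
      · rwa [conj hjb]
      · rwa [conj hjc]
    · rintro _ (h | h | h) <;> rw [h]
      · rwa [conj' hjc.symm]
      · rwa [conj' hja.symm]
      · rwa [conj' hjb.symm]

/-- The quotient by the normal subgroup `K` satisfies the relations of the von Dyck group
`(2, 3, p)`, hence is finite. -/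
lemma abstract_finite_index {G : Type*} [Group G] (r1 r2 r3 j : G) (p : ℕ)
    (hp : p = 3 ∨ p = 4 ∨ p = 5) (hr : r1 ^ p = 1) (hj : j ^ 3 = 1)
    (h12 : j * r1 = r2 * j) (h23 : j * r2 = r3 * j) (h31 : j * r3 = r1 * j)
    (b12 : r1 * r2 * r1 = r2 * r1 * r2) (b13 : r1 * r3 * r1 = r3 * r1 * r3) :
    Subgroup.closure {j * r1 * r3, j * r2 * r1, j * r3 * r2} ≤ Subgroup.closure {r1, j} ∧
    ((Subgroup.closure {j * r1 * r3, j * r2 * r1, j * r3 * r2}).subgroupOf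
      (Subgroup.closure {r1, j})).FiniteIndex := by
  have hnorm := normalizes r1 r2 r3 j h12 h23 h31 b12 b13
  have m1 : r1 ∈ Subgroup.closure {r1, j} := Subgroup.subset_closure (by simp)
  have mj : j ∈ Subgroup.closure {r1, j} := Subgroup.subset_closure (by simp)
  have e2 : r2 = j * r1 * j⁻¹ := by rw [h12]; group
  have m2 : r2 ∈ Subgroup.closure {r1, j} := e2 ▸ mul_mem (mul_mem mj m1) (inv_mem mj)
  have m3 : r3 ∈ Subgroup.closure {r1, j} :=
    (show j * r2 * j⁻¹ = r3 by rw [h23]; group) ▸ mul_mem (mul_mem mj m2) (inv_mem mj)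
  have mb : j * r2 * r1 ∈ Subgroup.closure {j * r1 * r3, j * r2 * r1, j * r3 * r2} :=
    Subgroup.subset_closure (by simp)
  refine ⟨?_, ?_⟩
  · rw [Subgroup.closure_le]
    rintro _ (rfl | rfl | rfl)
    · exact mul_mem (mul_mem mj m1) m3
    · exact mul_mem (mul_mem mj m2) m1
    · exact mul_mem (mul_mem mj m3) m2
  · generalize Subgroup.closure {j * r1 * r3, j * r2 * r1, j * r3 * r2} = K at hnorm mb ⊢
    have hgen : Subgroup.closure {(⟨r1, m1⟩ : Subgroup.closure {r1, j}), ⟨j, mj⟩} = ⊤ := by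
      rw [← Subgroup.closure_closure_coe_preimage (k := {r1, j})]
      congr 1
      ext ⟨g, hg⟩
      simp
    generalize Subgroup.closure {r1, j} = Γ at *
    have hN : (K.subgroupOf Γ).Normal := Subgroup.normal_subgroupOf_of_le_normalizer hnorm
    let q := QuotientGroup.mk' (K.subgroupOf Γ)
    have hfin : Finite (Γ ⧸ K.subgroupOf Γ) := by
      refine finite_vonDyck (q ⟨r1, m1⟩) (q ⟨j, mj⟩) p hp ?_ ?_ ?_ ?_
      · rw [← map_pow, ← map_one q]; congr 1; ext; simpa using hr
      · rw [← map_pow, ← map_one q]; congr 1; ext; simpa using hj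
      · -- `j r₂ r₁ = j² r₁ j⁻¹ r₁ = j⁻¹ (r₁ j⁻¹ r₁)` lies in `K`.
        have hq : q (⟨j, mj⟩⁻¹ * (⟨r1, m1⟩ * ⟨j, mj⟩⁻¹ * ⟨r1, m1⟩)) = 1 := by
          rw [QuotientGroup.mk'_apply, QuotientGroup.eq_one_iff, Subgroup.mem_subgroupOf]
          convert mb using 1
          have hj2 : j⁻¹ = j * j := inv_eq_of_mul_eq_one_left (by rw [← hj, pow_succ, pow_two])
          calc j⁻¹ * (r1 * j⁻¹ * r1) = (j * j) * (r1 * j⁻¹ * r1) := by rw [← hj2]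
            _ = j * r2 * r1 := by rw [e2]; simp only [mul_assoc]
        rw [map_mul, map_inv, inv_mul_eq_one] at hq
        simpa using hq.symm
      · have := congrArg (Subgroup.map q) hgen
        rw [MonoidHom.map_closure, Set.image_pair,
          Subgroup.map_top_of_surjective q (QuotientGroup.mk'_surjective _)] at this
        exact this
    exact Subgroup.finiteIndex_of_finite_quotient

lemma eta_sq_primitive (p : ℕ) (hp : p ≠ 0) : IsPrimitiveRoot (eta p ^ 2) p := by
  have h : eta p ^ 2 = Complex.exp (2 * Real.pi * Complex.I / p) := by
    rw [eta, ← Complex.exp_nat_mul]; congr 1; push_cast; ring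
  rw [h]; exact Complex.isPrimitiveRoot_exp p hp

/-- `R₁ - 1` has rank one with trace `η² - 1`, so `R₁ⁿ - 1` is a geometric sum times `R₁ - 1`. -/
lemma R1_pow (p : ℕ) (t : ℝ) (n : ℕ) :
    R1 p t ^ n = 1 + (∑ i ∈ Finset.range n, (eta p ^ 2) ^ i) • (R1 p t - 1) := by
  induction n with
  | zero => simp
  | succ n ih =>
    have hsq : (R1 p t - 1) * R1 p t = eta p ^ 2 • (R1 p t - 1) := by
      ext i k
      fin_cases i <;> fin_cases k <;>
        simp [R1, Matrix.mul_apply, Fin.sum_univ_three] <;> ring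
    rw [pow_succ, ih, add_mul, one_mul, smul_mul_assoc, hsq, geom_sum_succ, add_smul, one_smul,
      mul_smul, smul_comm]
    abel

lemma R1_pow_p (p : ℕ) (t : ℝ) (hp : 1 < p) : R1 p t ^ p = 1 := by
  rw [R1_pow, (eta_sq_primitive p (by lia)).geom_sum_eq_zero hp, zero_smul, add_zero]

lemma J_R1 (p : ℕ) (t : ℝ) : Jmat * R1 p t = R2 p t * Jmat := by
  ext i k
  fin_cases i <;> fin_cases k <;> simp [R1, R2, Jmat, Matrix.mul_apply, Fin.sum_univ_three]

lemma J_R2 (p : ℕ) (t : ℝ) : Jmat * R2 p t = R3 p t * Jmat := by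
  ext i k
  fin_cases i <;> fin_cases k <;> simp [R2, R3, Jmat, Matrix.mul_apply, Fin.sum_univ_three]

lemma J_R3 (p : ℕ) (t : ℝ) : Jmat * R3 p t = R1 p t * Jmat := by
  ext i k
  fin_cases i <;> fin_cases k <;> simp [R1, R3, Jmat, Matrix.mul_apply, Fin.sum_univ_three]

lemma J_cube : Jmat ^ 3 = 1 := by
  ext i k
  fin_cases i <;> fin_cases k <;> simp [pow_succ, Jmat, Matrix.mul_apply, Fin.sum_univ_three]

lemma braid12 (p : ℕ) (t : ℝ) : R1 p t * R2 p t * R1 p t = R2 p t * R1 p t * R2 p t := by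
  have h := phi_mul_phib t
  have hI := Complex.I_mul_I
  ext i k
  fin_cases i <;> fin_cases k <;> simp [R1, R2, Matrix.mul_apply, Fin.sum_univ_three] <;> grind

lemma braid13 (p : ℕ) (t : ℝ) : R1 p t * R3 p t * R1 p t = R3 p t * R1 p t * R3 p t := by
  have h := phi_mul_phib t
  have hI := Complex.I_mul_I
  ext i k
  fin_cases i <;> fin_cases k <;> simp [R1, R3, Matrix.mul_apply, Fin.sum_univ_three] <;> grind

/-- For each admissible pair (p,t), the subgroup K = ⟨J·R₁·R₃, J·R₂·R₁, J·R₃·R₂⟩ has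
finite index in Γ̃(p,t) = ⟨R₁, J⟩. -/
theorem K_finite_index_in_Gamma (p : ℕ) (t : ℝ) (hadm : admissible p t)
    (R1' R2' R3' J' : GL (Fin 3) ℂ)
    (hR1 : (R1' : Matrix (Fin 3) (Fin 3) ℂ) = R1 p t)
    (hR2 : (R2' : Matrix (Fin 3) (Fin 3) ℂ) = R2 p t)
    (hR3 : (R3' : Matrix (Fin 3) (Fin 3) ℂ) = R3 p t)
    (hJ : (J' : Matrix (Fin 3) (Fin 3) ℂ) = Jmat) :
    let Γ : Subgroup (GL (Fin 3) ℂ) := Subgroup.closure {R1', J'}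
    let K : Subgroup (GL (Fin 3) ℂ) :=
      Subgroup.closure {J' * R1' * R3', J' * R2' * R1', J' * R3' * R2'}
    K ≤ Γ ∧ (K.subgroupOf Γ).FiniteIndex := by
  intro Γ K
  have hp : p = 3 ∨ p = 4 ∨ p = 5 := by
    rcases hadm with h | h | h <;> simp [h.1]
  refine abstract_finite_index R1' R2' R3' J' p hp ?_ ?_ ?_ ?_ ?_ ?_ ?_ <;> ext1 <;>
    simp only [Units.val_mul, Units.val_pow_eq_pow_val, Units.val_one, hR1, hR2, hR3, hJ]
  · exact R1_pow_p p t (by lia)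
  · exact J_cube
  · exact J_R1 p t
  · exact J_R2 p t
  · exact J_R3 p t
  · exact braid12 p t
  · exact braid13 p t
end
end
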